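/- For every l ≥ 1 there exists a measure preserving bijection τ_l : 𝕋 → 𝕋^∞ such that for every f ∈ L¹(𝕋), setting g = f ∘ τ_l^{-1}, one has for every λ > 0 and every D ⊆ ℕ: |{x ∈ 𝕋 : ℛ_D^l f(x) > λ}| = λ({x ∈ 𝕋^∞ : ℳ_{l/D} g(x) > λ}). -/

import Mathlib

open MeasureTheory Set

/-- The circle `𝕋 = ℝ/ℤ` with its Lebesgue (Haar) probability measure. -/
abbrev Circle1 := AddCircle (1 : ℝ)

/-- The infinite torus `𝕋^∞ = ∏_{k=1}^∞ 𝕋`. -/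
abbrev Tinf := ℕ → Circle1

/-- `nthPrime k` is the `(k+1)`-st prime: `nthPrime 0 = 2 = p_1`, … -/
noncomputable def nthPrime (k : ℕ) : ℕ := Nat.nth Nat.Prime k

/-- The arc `[a, b) ⊆ 𝕋`. -/
def circleIco (a b : ℝ) : Set Circle1 := (fun r : ℝ => (r : Circle1)) '' Set.Ico a b

/-- The rectangle `B_m(j_1,…,j_d)` in `𝕋^∞`, where `m = p_1^{L_1} ⋯ p_d^{L_d}`. -/
def Rect (d : ℕ) (L j : Fin d → ℕ) : Set Tinf :=
  {x | ∀ k : Fin d,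
    x k.val ∈ circleIco ((j k : ℝ) / ((nthPrime k.val ^ L k : ℕ) : ℝ))
      (((j k : ℝ) + 1) / ((nthPrime k.val ^ L k : ℕ) : ℝ))}

/-- The Riemann set `I_l(n,t) = ⋃_{i=0}^{n-1} [t/l + i/n, (t+1)/l + i/n) ⊆ 𝕋`. -/
def RiemannSet (l n t : ℕ) : Set Circle1 :=
  ⋃ i ∈ Finset.range n,
    (fun r : ℝ => (r : Circle1)) ''
      Set.Ico ((t : ℝ) / l + (i : ℝ) / n) (((t : ℝ) + 1) / l + (i : ℝ) / n)

/-- `μ` is the product Lebesgue probability measure on `𝕋^∞`. -/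
def IsProductLebesgue (μ : Measure Tinf) : Prop :=
  IsProbabilityMeasure μ ∧
    ∀ (s : Finset ℕ) (A : ℕ → Set Circle1), (∀ i, MeasurableSet (A i)) →
      μ {x | ∀ i ∈ s, x i ∈ A i} = ∏ i ∈ s, volume (A i)

/-- The Riemann maximal function
`ℛ_D^l f(x) = sup { ⨍_{I_l(n,t)} |f| : n ∈ D, n ∣ l, x ∈ I_l(n,t) }`. -/
noncomputable def RMaxL (D : Set ℕ) (l : ℕ) (f : Circle1 → ℝ) (x : Circle1) : ENNReal :=
  ⨆ (n : ℕ) (_ : n ∈ D) (_ : n ∣ l) (t : ℕ) (_ : t < l / n) (_ : x ∈ RiemannSet l n t),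
    (volume (RiemannSet l n t))⁻¹ * ∫⁻ y in RiemannSet l n t, ‖f y‖₊ ∂volume

/-- The rectangle maximal function
`ℳ_D g(x) = sup { ⨍_B |g| dμ : B = B_m(j₁,…,j_d), m ∈ D, x ∈ B }`. -/
noncomputable def MMax (μ : Measure Tinf) (D : Set ℕ) (g : Tinf → ℝ) (x : Tinf) : ENNReal :=
  ⨆ (d : ℕ) (L : Fin d → ℕ) (j : Fin d → ℕ) (_ : (∏ k, nthPrime k.val ^ L k) ∈ D)
    (_ : ∀ k, j k < nthPrime k.val ^ L k) (_ : x ∈ Rect d L j),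
    (μ (Rect d L j))⁻¹ * ∫⁻ y in Rect d L j, ‖g y‖₊ ∂μ

/-- `l/D = {n : n divides l and l/n ∈ D}`. -/
def divSet (l : ℕ) (D : Set ℕ) : Set ℕ := {n | n ∣ l ∧ l / n ∈ D}

/-!
Label a point of `𝕋` by the index `n < l` of its arc `[n / l, (n + 1) / l)`. The Riemann set
`I_l(l/m, t)` consists of the arcs with `n ≡ t` modulo `m`, and by the Chinese remainder theorem
such a residue class is described by the residues of `n` modulo the prime powers `p ^ e` dividing
`m` exactly. The residue modulo `p ^ e` is given by the *last* `e` base-`p` digits of `n`, whereas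
an interval of length `p ^ (-e)` in a coordinate of `𝕋^∞` is given by the *first* `e` digits.
Reversing the digits of `n` in every base `p ∣ l` thus matches the arcs of length `1 / l` with the
rectangles `B_l`, and the Riemann sets `I_l(l/m, t)` with the rectangles `B_m`, for all `m ∣ l` at
once. Since Lebesgue measure is atomless on both sides, each arc can be mapped onto its rectangle by
a measure-preserving isomorphism. Then `ℛ_D^l f` and `ℳ_{l/D} g` agree pointwise.
-/

open Filter Function ProbabilityTheory
open scoped ENNReal

section AtomlessIsomorphism

variable {X Y : Type*} [MeasurableSpace X] [MeasurableSpace Y]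

lemma uncountable_of_nullSingletonClass (μ : Measure X) [NullSingletonClass μ] [NeZero μ] :
    Uncountable X :=
  not_countable_iff.1 fun _ =>
    NeZero.ne μ <| Measure.measure_univ_eq_zero.1 (countable_univ.measure_zero μ)

lemma nullSingletonClass_comap {f : X → Y} (hf : MeasurableEmbedding f) (μ : Measure Y)
    [NullSingletonClass μ] : NullSingletonClass (μ.comap f) :=
  ⟨fun x => by rw [hf.comap_apply, image_singleton, measure_singleton]⟩

lemma nullSingletonClass_map (e : X ≃ᵐ Y) (μ : Measure X) [NullSingletonClass μ] :
    NullSingletonClass (μ.map e) :=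
  ⟨fun y => by
    rw [e.map_apply]
    exact (subsingleton_singleton.preimage e.injective).measure_zero μ⟩

lemma exists_measurableSet_null_not_countable [StandardBorelSpace X] (μ : Measure X) [SFinite μ]
    [NullSingletonClass μ] [NeZero μ] : ∃ K : Set X, MeasurableSet K ∧ μ K = 0 ∧ ¬K.Countable := by
  have := uncountable_of_nullSingletonClass μ
  let e : X ≃ᵐ ℝ × ℝ :=
    PolishSpace.measurableEquivOfNotCountable (not_countable_iff.2 ‹_›)
      (not_countable_iff.2 inferInstance)
  -- The uncountably many vertical lines of the plane cannot all have positive measure.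
  let line : ℝ → Set X := fun c => e ⁻¹' (Prod.fst ⁻¹' {c})
  have measurableSet_line (c : ℝ) : MeasurableSet (line c) :=
    e.measurable (measurable_fst (measurableSet_singleton c))
  have disjoint_line : Pairwise (Disjoint on line) := fun c d hcd =>
    ((disjoint_singleton.2 hcd).preimage _).preimage _
  obtain ⟨c, hc⟩ : ∃ c, ¬0 < μ (line c) := by
    by_contra! h
    exact Cardinal.not_countable_real <|
      (Measure.countable_meas_pos_of_disjoint_iUnion measurableSet_line disjoint_line).mono
        fun c _ => h c
  refine ⟨line c, measurableSet_line c, by simpa using hc, fun hK => ?_⟩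
  have image_line : (fun x => (e x).2) '' line c = univ :=
    eq_univ_of_forall fun y => ⟨e.symm (c, y), by simp [line], by simp⟩
  exact Cardinal.not_countable_real (image_line ▸ hK.image _)

lemma exists_measurableEquiv_eqOn [StandardBorelSpace X] [StandardBorelSpace Y] {f : X → Y}
    (hf : Measurable f) {s : Set X} (hs : MeasurableSet s) (hinj : InjOn f s)
    (hsc : ¬sᶜ.Countable) (hfsc : ¬(f '' s)ᶜ.Countable) : ∃ e : X ≃ᵐ Y, EqOn e f s := by
  classical
  have := hs.standardBorel
  have embedding : MeasurableEmbedding (s.domRestrict f) :=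
    (hf.comp measurable_subtype_coe).measurableEmbedding hinj.injective
  have := hs.compl.standardBorel
  have := embedding.measurableSet_range.compl.standardBorel
  rw [← range_domRestrict] at hfsc
  let outer : (sᶜ : Set X) ≃ᵐ ((range (s.domRestrict f))ᶜ : Set Y) :=
    PolishSpace.measurableEquivOfNotCountable (mt countable_coe_iff.1 hsc)
      (mt countable_coe_iff.1 hfsc)
  refine ⟨(MeasurableEquiv.sumCompl hs).symm.trans ((embedding.equivRange.sumCongr outer).trans
    (MeasurableEquiv.sumCompl embedding.measurableSet_range)), fun x hx => ?_⟩
  have symm_apply : (MeasurableEquiv.sumCompl hs).symm x = Sum.inl ⟨x, hx⟩ :=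
    Equiv.Set.sumCompl_symm_apply_of_mem hx
  simp only [MeasurableEquiv.trans_apply, symm_apply]
  exact congrArg Subtype.val (embedding.equivRange_apply ⟨x, hx⟩)

lemma exists_measurableEquiv_ae_eq [StandardBorelSpace X] [StandardBorelSpace Y] {μ : Measure X}
    {ν : Measure Y} [SFinite μ] [NullSingletonClass μ] [NeZero μ] [SFinite ν] [NullSingletonClass ν]
    [NeZero ν] {f : X → Y} (hf : MeasurePreserving f μ ν) {s : Set X} (hs : MeasurableSet s)
    (hs0 : μ sᶜ = 0) (hinj : InjOn f s) : ∃ e : X ≃ᵐ Y, e =ᵐ[μ] f := by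
  obtain ⟨K, hK, hK0, hKc⟩ := exists_measurableSet_null_not_countable μ
  obtain ⟨J, hJ, hJ0, hJc⟩ := exists_measurableSet_null_not_countable ν
  -- Discarding `K` and `f ⁻¹' J` leaves uncountable remainders on both sides.
  let t := s \ (K ∪ f ⁻¹' J)
  have ht : MeasurableSet t := hs.diff (hK.union (hf.measurable hJ))
  have ht_null : μ tᶜ = 0 := by
    rw [compl_sdiff]
    exact measure_union_null (measure_union_null hK0
      (by rw [hf.measure_preimage hJ.nullMeasurableSet, hJ0])) hs0
  have subset_compl : K ⊆ tᶜ := fun x hx hxt => hxt.2 (.inl hx)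
  have subset_compl_image : J ⊆ (f '' t)ᶜ := by
    rintro _ hy ⟨x, hx, rfl⟩
    exact hx.2 (.inr hy)
  obtain ⟨e, he⟩ := exists_measurableEquiv_eqOn hf.measurable ht (hinj.mono sdiff_subset)
    (mt (.mono subset_compl) hKc) (mt (.mono subset_compl_image) hJc)
  exact ⟨e, he.aeEq ht_null⟩

lemma continuous_cdf (μ : Measure ℝ) [IsProbabilityMeasure μ] [NullSingletonClass μ] :
    Continuous (cdf μ) := by
  refine continuous_iff_continuousAt.2 fun x => ?_
  rw [(monotone_cdf μ).continuousAt_iff_leftLim_eq_rightLim, StieltjesFunction.rightLim_eq]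
  refine le_antisymm ((monotone_cdf μ).leftLim_le le_rfl) ?_
  have measure_jump : ENNReal.ofReal (cdf μ x - leftLim (cdf μ) x) = 0 := by
    rw [← StieltjesFunction.measure_singleton, measure_cdf, measure_singleton]
  simpa using measure_jump

lemma measure_preimage_cdf_Iic (μ : Measure ℝ) [IsProbabilityMeasure μ] [NullSingletonClass μ]
    {u : ℝ} (hu : u < 1) : μ (cdf μ ⁻¹' Iic u) = ENNReal.ofReal u := by
  set S := cdf μ ⁻¹' Iic u
  rcases S.eq_empty_or_nonempty with hS | hS
  · have u_nonpos : u ≤ 0 := by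
      by_contra! hu0
      obtain ⟨x, hx⟩ := ((tendsto_cdf_atBot μ).eventually_le_const hu0).exists
      exact eq_empty_iff_forall_notMem.1 hS x hx
    rw [hS, measure_empty, ENNReal.ofReal_of_nonpos u_nonpos]
  obtain ⟨b, hb⟩ := ((tendsto_cdf_atTop μ).eventually_const_lt hu).exists
  have bddAbove : BddAbove S := ⟨b, fun y hy => ((monotone_cdf μ).reflect_lt (hy.trans_lt hb)).le⟩
  have sSup_mem : sSup S ∈ S :=
    (isClosed_Iic.preimage (continuous_cdf μ)).csSup_mem hS bddAbove
  have S_eq_Iic : S = Iic (sSup S) :=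
    Subset.antisymm (fun y hy => le_csSup bddAbove hy)
      fun y hy => (monotone_cdf μ hy).trans sSup_mem
  have cdf_sSup : cdf μ (sSup S) = u := by
    refine le_antisymm sSup_mem (ge_of_tendsto
      ((continuous_cdf μ).continuousWithinAt (s := Ioi (sSup S)) (x := sSup S)) ?_)
    filter_upwards [self_mem_nhdsWithin] with y hy
    exact (not_le.1 fun hyS => (notMem_of_csSup_lt hy bddAbove) hyS).le
  rw [S_eq_Iic, ← ofReal_cdf, cdf_sSup]

lemma measurePreserving_cdf (μ : Measure ℝ) [IsProbabilityMeasure μ] [NullSingletonClass μ] :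
    MeasurePreserving (cdf μ) μ (volume.restrict (Icc 0 1)) := by
  have measurable_cdf : Measurable (cdf μ) := (monotone_cdf μ).measurable
  have : IsProbabilityMeasure (μ.map (cdf μ)) :=
    Measure.isProbabilityMeasure_map measurable_cdf.aemeasurable
  refine ⟨measurable_cdf, Measure.ext_of_Iic _ _ fun u => ?_⟩
  have Iic_inter_Icc : Iic u ∩ Icc 0 1 = Icc 0 (min 1 u) := by
    rw [inter_comm, ← Ici_inter_Iic, inter_assoc, Iic_inter_Iic, Ici_inter_Iic]
  rw [Measure.map_apply measurable_cdf measurableSet_Iic, Measure.restrict_apply measurableSet_Iic,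
    Iic_inter_Icc, Real.volume_Icc, sub_zero]
  rcases lt_or_ge u 1 with hu | hu
  · rw [measure_preimage_cdf_Iic μ hu, min_eq_right hu.le]
  · have preimage_eq_univ : cdf μ ⁻¹' Iic u = univ :=
      eq_univ_of_forall fun x => (cdf_le_one μ x).trans hu
    rw [preimage_eq_univ, measure_univ, min_eq_left hu, ENNReal.ofReal_one]

lemma exists_measurableEquiv_uniform [StandardBorelSpace X] (μ : Measure X)
    [IsProbabilityMeasure μ] [NullSingletonClass μ] :
    ∃ e : X ≃ᵐ ℝ, MeasurePreserving e μ (volume.restrict (Icc 0 1)) := by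
  have := uncountable_of_nullSingletonClass μ
  let φ : X ≃ᵐ ℝ := PolishSpace.measurableEquivOfNotCountable
    (not_countable_iff.2 ‹_›) (not_countable_iff.2 inferInstance)
  have := nullSingletonClass_map φ μ
  have : IsProbabilityMeasure (μ.map φ) :=
    Measure.isProbabilityMeasure_map φ.measurable.aemeasurable
  have : NeZero (volume.restrict (Icc (0 : ℝ) 1)) := ⟨by simp⟩
  have hF := measurePreserving_cdf (μ.map φ)
  have countable_plateaus := (monotone_cdf (μ.map φ)).countable_setOfPred_two_preimages
  let s := (cdf (μ.map φ) ⁻¹' {c | ∃ x y, x < y ∧ cdf (μ.map φ) x = c ∧ cdf (μ.map φ) y = c})ᶜ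
  have hs_null : μ.map φ sᶜ = 0 := by
    rw [compl_compl, hF.measure_preimage countable_plateaus.measurableSet.nullMeasurableSet,
      countable_plateaus.measure_zero]
  have hinj : InjOn (cdf (μ.map φ)) s := by
    intro x hx y _ hxy
    by_contra hne
    rcases lt_or_gt_of_ne hne with h | h
    · exact hx ⟨x, y, h, rfl, hxy.symm⟩
    · exact hx ⟨y, x, h, hxy.symm, rfl⟩
  obtain ⟨e, he⟩ := exists_measurableEquiv_ae_eq hF
    (hF.measurable countable_plateaus.measurableSet).compl hs_null hinj
  have he_preserving : MeasurePreserving e (μ.map φ) (volume.restrict (Icc 0 1)) :=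
    ⟨e.measurable, (Measure.map_congr he).trans hF.map_eq⟩
  exact ⟨φ.trans e, he_preserving.comp (φ.measurable.measurePreserving μ)⟩

theorem exists_measurableEquiv_measurePreserving [StandardBorelSpace X] [StandardBorelSpace Y]
    (μ : Measure X) (ν : Measure Y) [IsFiniteMeasure μ] [NullSingletonClass μ] [NeZero μ]
    [NullSingletonClass ν] (h : μ univ = ν univ) :
    ∃ e : X ≃ᵐ Y, MeasurePreserving e μ ν := by
  have hc0 : μ univ ≠ 0 := NeZero.ne _
  have hc_top : μ univ ≠ ∞ := measure_ne_top _ _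
  have : IsProbabilityMeasure ((μ univ)⁻¹ • μ) := ⟨ENNReal.inv_mul_cancel hc0 hc_top⟩
  have : IsProbabilityMeasure ((μ univ)⁻¹ • ν) := ⟨by
    rw [Measure.smul_apply, smul_eq_mul, ← h, ENNReal.inv_mul_cancel hc0 hc_top]⟩
  have : NullSingletonClass ((μ univ)⁻¹ • μ) := ⟨fun x => by simp⟩
  have : NullSingletonClass ((μ univ)⁻¹ • ν) := ⟨fun x => by simp⟩
  obtain ⟨φ, hφ⟩ := exists_measurableEquiv_uniform ((μ univ)⁻¹ • μ)
  obtain ⟨ψ, hψ⟩ := exists_measurableEquiv_uniform ((μ univ)⁻¹ • ν)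
  have scaled := ((hψ.symm ψ).comp hφ).smul_measure (μ univ)
  simp only [smul_smul, ENNReal.mul_inv_cancel hc0 hc_top, one_smul] at scaled
  exact ⟨φ.trans ψ.symm, scaled⟩

end AtomlessIsomorphism

section FiberGluing

variable {X Y ι : Type*} [MeasurableSpace X] [MeasurableSpace Y] [MeasurableSpace ι] [Countable ι]
  [MeasurableSingletonClass ι] {a : X → ι} {b : Y → ι}

lemma measurable_of_forall_fiber (ha : Measurable a) {f : X → Y}
    (hf : ∀ i, Measurable fun x : {x // a x = i} => f x) : Measurable f := by
  intro A hA
  have preimage_eq : f ⁻¹' A =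
      ⋃ i, Subtype.val '' ((fun x : {x // a x = i} => f x) ⁻¹' A) := by ext; simp
  rw [preimage_eq]
  exact .iUnion fun i =>
    (ha (measurableSet_singleton i) : MeasurableSet {x | a x = i}).subtype_image (hf i hA)

/-- The measurable equivalence glued from measurable equivalences between corresponding fibers of
two countable-valued functions. -/
def measurableEquivOfFiber (ha : Measurable a) (hb : Measurable b)
    (E : ∀ i, {x // a x = i} ≃ᵐ {y // b y = i}) : X ≃ᵐ Y where
  toEquiv := Equiv.ofFiberEquiv fun i => (E i).toEquiv
  measurable_toFun := measurable_of_forall_fiber ha fun i => by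
    convert! measurable_subtype_coe.comp (E i).measurable with x
    obtain ⟨x, rfl⟩ := x
    rfl
  measurable_invFun := measurable_of_forall_fiber hb fun i => by
    convert! measurable_subtype_coe.comp (E i).symm.measurable with y
    obtain ⟨y, rfl⟩ := y
    rfl

lemma measurableEquivOfFiber_apply_coe (ha : Measurable a) (hb : Measurable b)
    (E : ∀ i, {x // a x = i} ≃ᵐ {y // b y = i}) (i : ι) (x : {x // a x = i}) :
    measurableEquivOfFiber ha hb E x = (E i x : Y) := by
  obtain ⟨x, rfl⟩ := x
  rfl

lemma fiber_measurableEquivOfFiber (ha : Measurable a) (hb : Measurable b)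
    (E : ∀ i, {x // a x = i} ≃ᵐ {y // b y = i}) (x : X) :
    b (measurableEquivOfFiber ha hb E x) = a x :=
  Equiv.ofFiberEquiv_map _ x

lemma measurePreserving_measurableEquivOfFiber {μ : Measure X} {ν : Measure Y} (ha : Measurable a)
    (hb : Measurable b) {E : ∀ i, {x // a x = i} ≃ᵐ {y // b y = i}}
    (hE : ∀ i, MeasurePreserving (E i) (μ.comap Subtype.val) (ν.comap Subtype.val)) :
    MeasurePreserving (measurableEquivOfFiber ha hb E) μ ν := by
  set e := measurableEquivOfFiber ha hb E
  have cover : ⋃ i, {y | b y = i} = univ := by ext; simp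
  refine ⟨e.measurable, (Measure.ext_iff_of_iUnion_eq_univ cover).2 fun i => ?_⟩
  have hai : MeasurableSet {x | a x = i} := ha (measurableSet_singleton i)
  have hbi : MeasurableSet {y | b y = i} := hb (measurableSet_singleton i)
  have map_comap_left : (μ.comap (Subtype.val : {x // a x = i} → X)).map Subtype.val =
      μ.restrict {x | a x = i} := (measurePreserving_subtype_coe hai).map_eq
  have map_comap_right : (ν.comap (Subtype.val : {y // b y = i} → Y)).map Subtype.val =
      ν.restrict {y | b y = i} := (measurePreserving_subtype_coe hbi).map_eq
  have preimage_fiber : e ⁻¹' {y | b y = i} = {x | a x = i} := by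
    ext x
    simp only [mem_preimage, mem_ofPred_eq, e, fiber_measurableEquivOfFiber]
  have e_comp_coe : e ∘ (Subtype.val : {x // a x = i} → X) = Subtype.val ∘ E i :=
    funext (measurableEquivOfFiber_apply_coe ha hb E i)
  calc (μ.map e).restrict {y | b y = i}
      = ((μ.comap (Subtype.val : {x // a x = i} → X)).map Subtype.val).map e := by
        rw [Measure.restrict_map e.measurable hbi, preimage_fiber, map_comap_left]
    _ = ((μ.comap (Subtype.val : {x // a x = i} → X)).map (E i)).map Subtype.val := by
        rw [Measure.map_map e.measurable measurable_subtype_coe, e_comp_coe,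
          Measure.map_map measurable_subtype_coe (E i).measurable]
    _ = ν.restrict {y | b y = i} := by
        rw [(hE i).map_eq, map_comap_right]

theorem exists_measurableEquiv_measurePreserving_fiber [StandardBorelSpace X]
    [StandardBorelSpace Y] {μ : Measure X} {ν : Measure Y} [IsFiniteMeasure μ]
    [NullSingletonClass μ] [NullSingletonClass ν] (ha : Measurable a) (hb : Measurable b)
    (hab : ∀ i, μ {x | a x = i} = ν {y | b y = i}) (ha0 : ∀ i, μ {x | a x = i} ≠ 0) :
    ∃ e : X ≃ᵐ Y, MeasurePreserving e μ ν ∧ ∀ x, b (e x) = a x := by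
  have exists_fiber_equiv (i : ι) : ∃ E : {x // a x = i} ≃ᵐ {y // b y = i},
      MeasurePreserving E (μ.comap Subtype.val) (ν.comap Subtype.val) := by
    have hai : MeasurableSet {x | a x = i} := ha (measurableSet_singleton i)
    have hbi : MeasurableSet {y | b y = i} := hb (measurableSet_singleton i)
    have : StandardBorelSpace {x // a x = i} := hai.standardBorel
    have : StandardBorelSpace {y // b y = i} := hbi.standardBorel
    have hca : MeasurableEmbedding (Subtype.val : {x // a x = i} → X) := .subtype_coe hai
    have hcb : MeasurableEmbedding (Subtype.val : {y // b y = i} → Y) := .subtype_coe hbi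
    have comap_univ_left : μ.comap (Subtype.val : {x // a x = i} → X) univ = μ {x | a x = i} := by
      rw [hca.comap_apply, image_univ, Subtype.range_coe_subtype]
    have comap_univ_right : ν.comap (Subtype.val : {y // b y = i} → Y) univ = ν {y | b y = i} := by
      rw [hcb.comap_apply, image_univ, Subtype.range_coe_subtype]
    have : NeZero (μ.comap (Subtype.val : {x // a x = i} → X)) :=
      ⟨fun h => ha0 i (by rw [← comap_univ_left, h, Measure.coe_zero, Pi.zero_apply])⟩
    have := nullSingletonClass_comap hca μ
    have := nullSingletonClass_comap hcb ν
    exact exists_measurableEquiv_measurePreserving _ _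
      (by rw [comap_univ_left, comap_univ_right, hab])
  choose E hE using exists_fiber_equiv
  exact ⟨measurableEquivOfFiber ha hb E, measurePreserving_measurableEquivOfFiber ha hb hE,
    fiber_measurableEquivOfFiber ha hb E⟩

end FiberGluing

section DigitReversal

/-- The number whose `e` base-`p` digits are the lowest `e` digits of `n` in reversed order. -/
def digitReverse (p : ℕ) : ℕ → ℕ → ℕ
  | 0, _ => 0
  | e + 1, n => p * digitReverse p e n + n / p ^ e % p

variable {p : ℕ}

lemma digitReverse_lt (hp : 0 < p) (e n : ℕ) : digitReverse p e n < p ^ e := by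
  induction e with
  | zero => simp [digitReverse]
  | succ e ih =>
    rw [digitReverse, pow_succ']
    have digit_lt := Nat.mod_lt (n / p ^ e) hp
    nlinarith [Nat.mul_le_mul_left p ih]

lemma digitReverse_add_div_pow (hp : 0 < p) (e k n : ℕ) :
    digitReverse p (e + k) n / p ^ k = digitReverse p e n := by
  induction k with
  | zero => simp
  | succ k ih =>
    rw [← add_assoc, digitReverse, pow_succ', ← Nat.div_div_eq_div_mul, Nat.mul_add_div hp,
      Nat.div_eq_of_lt (Nat.mod_lt _ hp), add_zero, ih]

lemma add_mul_eq_add_mul_iff_of_lt {b r r' q q' : ℕ} (hr : r < b) (hr' : r' < b) :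
    r + b * q = r' + b * q' ↔ r = r' ∧ q = q' := by
  refine ⟨fun h => ⟨?_, ?_⟩, fun ⟨h, h'⟩ => by rw [h, h']⟩
  · simpa [Nat.mod_eq_of_lt, hr, hr'] using congrArg (· % b) h
  · simpa [Nat.add_mul_div_left, Nat.zero_lt_of_lt hr, Nat.div_eq_of_lt, hr, hr']
      using congrArg (· / b) h

lemma digitReverse_eq_iff_modEq (hp : 0 < p) (e n n' : ℕ) :
    digitReverse p e n = digitReverse p e n' ↔ n ≡ n' [MOD p ^ e] := by
  induction e with
  | zero => simp [digitReverse, Nat.modEq_one]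
  | succ e ih =>
    have hpe : 0 < p ^ e := Nat.pow_pos hp
    rw [digitReverse, digitReverse, add_comm, add_comm (p * _),
      add_mul_eq_add_mul_iff_of_lt (Nat.mod_lt _ hp) (Nat.mod_lt _ hp), ih, Nat.ModEq, Nat.ModEq,
      Nat.mod_pow_succ, Nat.mod_pow_succ,
      add_mul_eq_add_mul_iff_of_lt (Nat.mod_lt _ hpe) (Nat.mod_lt _ hpe), and_comm]

lemma modEq_prod_iff {κ : Type*} [Fintype κ] {m : κ → ℕ} (hm : Pairwise (Nat.Coprime on m))
    {a b : ℕ} : a ≡ b [MOD ∏ k, m k] ↔ ∀ k, a ≡ b [MOD m k] := by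
  refine ⟨fun h k => h.of_dvd (Finset.dvd_prod_of_mem m (Finset.mem_univ k)), fun h => ?_⟩
  rw [Nat.modEq_iff_dvd, Nat.cast_prod]
  exact Fintype.prod_dvd_of_coprime (fun i j hij => Nat.isCoprime_iff_coprime.2 (hm hij))
    fun k => Nat.modEq_iff_dvd.1 (h k)

variable {κ : Type*} [Fintype κ] {p e : κ → ℕ}

lemma forall_digitReverse_eq_iff_modEq (hp : ∀ k, 0 < p k)
    (hcop : Pairwise (Nat.Coprime on fun k => p k ^ e k)) {n n' : ℕ} :
    (∀ k, digitReverse (p k) (e k) n = digitReverse (p k) (e k) n') ↔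
      n ≡ n' [MOD ∏ k, p k ^ e k] := by
  simp only [modEq_prod_iff hcop, digitReverse_eq_iff_modEq (hp _)]

lemma exists_lt_prod_digitReverse_eq (hp : ∀ k, 0 < p k)
    (hcop : Pairwise (Nat.Coprime on fun k => p k ^ e k)) {j : κ → ℕ} (hj : ∀ k, j k < p k ^ e k) :
    ∃ n < ∏ k, p k ^ e k, ∀ k, digitReverse (p k) (e k) n = j k := by
  classical
  let reversals : Fin (∏ k, p k ^ e k) → ∀ k, Fin (p k ^ e k) := fun n k =>
    ⟨digitReverse (p k) (e k) n, digitReverse_lt (hp k) (e k) n⟩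
  have injective : Injective reversals := fun n n' h => by
    have modEq : n ≡ n' [MOD ∏ k, p k ^ e k] := (forall_digitReverse_eq_iff_modEq hp hcop).1
      fun k => congrArg Fin.val (congrFun h k)
    exact Fin.ext (modEq.eq_of_lt_of_lt n.2 n'.2)
  have bijective : Bijective reversals :=
    (Fintype.bijective_iff_injective_and_card _).2 ⟨injective, by simp⟩
  obtain ⟨n, hn⟩ := bijective.surjective fun k => ⟨j k, hj k⟩
  exact ⟨n, n.2, fun k => congrArg Fin.val (congrFun hn k)⟩

end DigitReversal

section NthPrime

lemma nthPrime_prime (k : ℕ) : (nthPrime k).Prime := Nat.prime_nth_prime k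

lemma nthPrime_injective : Injective nthPrime := Nat.nth_injective Nat.infinite_setOfPred_prime

lemma lt_nthPrime (k : ℕ) : k < nthPrime k :=
  (Nat.lt_add_of_pos_right two_pos).trans_le (Nat.add_two_le_nth_prime k)

lemma pairwise_coprime_nthPrime_pow {d : ℕ} (L : Fin d → ℕ) :
    Pairwise (Nat.Coprime on fun k : Fin d => nthPrime k ^ L k) :=
  fun _ _ hik => Nat.coprime_pow_primes _ _ (nthPrime_prime _) (nthPrime_prime _)
    (nthPrime_injective.ne (Fin.val_injective.ne hik))

lemma prod_nthPrime_pow_factorization {l m : ℕ} (hm : m ≠ 0) (hml : m ≤ l) :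
    ∏ k : Fin l, nthPrime k ^ m.factorization (nthPrime k) = m := by
  rw [Fin.prod_univ_eq_prod_range fun k => nthPrime k ^ m.factorization (nthPrime k)]
  conv_rhs => rw [← Nat.prod_factorization_pow_eq_self hm]
  rw [Finsupp.prod_of_support_subset (s := (Finset.range l).image nthPrime) _ _ _ (by simp),
    Finset.prod_image nthPrime_injective.injOn]
  intro q hq
  have q_prime : q.Prime := Nat.prime_of_mem_primeFactors hq
  have nthPrime_count : nthPrime (Nat.count Nat.Prime q) = q := Nat.nth_count q_prime
  have count_lt : Nat.count Nat.Prime q < l :=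
    calc Nat.count Nat.Prime q < q := (lt_nthPrime _).trans_eq nthPrime_count
      _ ≤ l := (Nat.le_of_mem_primeFactors hq).trans hml
  exact Finset.mem_image.2 ⟨_, Finset.mem_range.2 count_lt, nthPrime_count⟩

end NthPrime

section CircleArcs

/-- The representative in `[0, 1)` of a point of the circle. -/
noncomputable def circleRep (x : Circle1) : ℝ := AddCircle.equivIco 1 0 x

/-- The index `j < N` of the arc `[j / N, (j + 1) / N)` containing `x`. -/
noncomputable def arcIndex (N : ℕ) (x : Circle1) : ℕ := ⌊N * circleRep x⌋₊

lemma circleRep_nonneg (x : Circle1) : 0 ≤ circleRep x := (AddCircle.equivIco 1 0 x).2.1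

lemma circleRep_lt_one (x : Circle1) : circleRep x < 1 :=
  (AddCircle.equivIco 1 0 x).2.2.trans_eq (zero_add 1)

lemma coe_circleRep (x : Circle1) : (circleRep x : Circle1) = x :=
  (AddCircle.equivIco 1 0).symm_apply_apply x

lemma circleRep_coe {r : ℝ} (hr : r ∈ Ico 0 1) : circleRep r = r := by
  rw [circleRep, AddCircle.coe_equivIco_mk_apply, div_one, mul_one, Int.fract_eq_self.2 hr]

lemma measurable_circleRep : Measurable circleRep :=
  measurable_subtype_coe.comp (AddCircle.measurableEquivIco 1 0).measurable

lemma measurable_arcIndex (N : ℕ) : Measurable (arcIndex N) :=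
  Nat.measurable_floor.comp (measurable_circleRep.const_mul _)

variable {N j : ℕ}

lemma arcIndex_lt (hN : 0 < N) (x : Circle1) : arcIndex N x < N := by
  rw [arcIndex, Nat.floor_lt (mul_nonneg N.cast_nonneg (circleRep_nonneg x))]
  exact mul_lt_of_lt_one_right (Nat.cast_pos.2 hN) (circleRep_lt_one x)

lemma arcIndex_eq_iff (hN : 0 < N) (x : Circle1) :
    arcIndex N x = j ↔ circleRep x ∈ Ico ((j : ℝ) / N) ((j + 1) / N) := by
  have hN' : (0 : ℝ) < N := Nat.cast_pos.2 hN
  rw [arcIndex, Nat.floor_eq_iff (mul_nonneg hN'.le (circleRep_nonneg x)), mem_Ico,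
    div_le_iff₀' hN', lt_div_iff₀' hN']

lemma arcIndex_mul_div {M : ℕ} (hM : M ≠ 0) (N : ℕ) (x : Circle1) :
    arcIndex (N * M) x / M = arcIndex N x := by
  have hM' : (M : ℝ) ≠ 0 := Nat.cast_ne_zero.2 hM
  rw [arcIndex, ← Nat.floor_div_natCast, Nat.cast_mul, mul_right_comm, mul_div_cancel_right₀ _ hM',
    arcIndex]

lemma Ico_natCast_div_subset (hj : j < N) : Ico ((j : ℝ) / N) ((j + 1) / N) ⊆ Ico 0 1 := by
  have hj' : (j : ℝ) + 1 ≤ N := by exact_mod_cast hj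
  exact Ico_subset_Ico (by positivity) (div_le_one_of_le₀ hj' N.cast_nonneg)

lemma mem_circleIco_iff_arcIndex_eq (hj : j < N) (x : Circle1) :
    x ∈ circleIco ((j : ℝ) / N) ((j + 1) / N) ↔ arcIndex N x = j := by
  rw [arcIndex_eq_iff (Nat.zero_lt_of_lt hj)]
  refine ⟨?_, fun h => ⟨circleRep x, h, coe_circleRep x⟩⟩
  rintro ⟨r, hr, rfl⟩
  simpa only [circleRep_coe (Ico_natCast_div_subset hj hr)] using hr

lemma volume_arcIndex_eq (hj : j < N) : volume {x | arcIndex N x = j} = (N : ℝ≥0∞)⁻¹ := by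
  have measurableSet_arc : MeasurableSet {x | arcIndex N x = j} :=
    measurable_arcIndex N (measurableSet_singleton j)
  have mk_preserving := AddCircle.measurePreserving_mk 1 0
  have preimage_arc : QuotientAddGroup.mk ⁻¹' {x | arcIndex N x = j} ∩ Ico (0 : ℝ) 1 =
      Ico ((j : ℝ) / N) ((j + 1) / N) := by
    ext r
    refine ⟨fun ⟨h, hr⟩ => ?_, fun hr => ⟨?_, Ico_natCast_div_subset hj hr⟩⟩
    · rwa [← circleRep_coe hr, ← arcIndex_eq_iff (Nat.zero_lt_of_lt hj)]
    · refine (arcIndex_eq_iff (Nat.zero_lt_of_lt hj) (r : Circle1)).2 ?_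
      rwa [circleRep_coe (Ico_natCast_div_subset hj hr)]
  rw [← mk_preserving.measure_preimage measurableSet_arc.nullMeasurableSet,
    ← restrict_Ioo_eq_restrict_Ioc, restrict_Ioo_eq_restrict_Ico, zero_add,
    Measure.restrict_apply (mk_preserving.measurable measurableSet_arc), preimage_arc,
    Real.volume_Ico, ← sub_div, add_sub_cancel_left, one_div,
    ENNReal.ofReal_inv_of_pos (Nat.cast_pos.2 (Nat.zero_lt_of_lt hj)), ENNReal.ofReal_natCast]

lemma nullSingletonClass_circle : NullSingletonClass (volume : Measure Circle1) :=
  ⟨fun x => by rw [← Metric.closedBall_zero, AddCircle.volume_closedBall]; simp⟩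

end CircleArcs

section RiemannSets

/-- The points of the circle whose arc index among `l` arcs is congruent modulo `m` to that of `x`:
the Riemann set `I_l(l/m, t)` containing `x`. -/
def arcResidueClass (l m : ℕ) (x : Circle1) : Set Circle1 :=
  {z | arcIndex l z ≡ arcIndex l x [MOD m]}

lemma mem_RiemannSet_iff {l n t : ℕ} (hl : l ≠ 0) (hn : n ∣ l) (ht : t < l / n) (x : Circle1) :
    x ∈ RiemannSet l n t ↔ arcIndex l x % (l / n) = t := by
  obtain ⟨m, rfl⟩ := hn
  obtain ⟨hn0, hm0⟩ := mul_ne_zero_iff.1 hl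
  have hnR : (n : ℝ) ≠ 0 := Nat.cast_ne_zero.2 hn0
  have hmR : (m : ℝ) ≠ 0 := Nat.cast_ne_zero.2 hm0
  rw [Nat.mul_div_cancel_left m (Nat.pos_of_ne_zero hn0)] at ht ⊢
  have mem_arc_iff {i : ℕ} (hi : i < n) :
      x ∈ (fun r : ℝ => (r : Circle1)) ''
        Ico ((t : ℝ) / (n * m : ℕ) + (i : ℝ) / n) (((t : ℝ) + 1) / (n * m : ℕ) + (i : ℝ) / n) ↔
      arcIndex (n * m) x = t + m * i := by
    have index_lt : t + m * i < n * m := by nlinarith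
    have left_eq : (t : ℝ) / (n * m : ℕ) + (i : ℝ) / n = (t + m * i : ℕ) / (n * m : ℕ) := by
      push_cast
      field_simp
    have right_eq : ((t : ℝ) + 1) / (n * m : ℕ) + (i : ℝ) / n =
        ((t + m * i : ℕ) + 1) / (n * m : ℕ) := by
      push_cast
      field_simp
      ring
    rw [left_eq, right_eq, ← mem_circleIco_iff_arcIndex_eq index_lt, circleIco]
  simp only [RiemannSet, mem_iUnion, Finset.mem_range, exists_prop]
  constructor
  · rintro ⟨i, hi, h⟩
    rw [(mem_arc_iff hi).1 h, Nat.add_mul_mod_self_left, Nat.mod_eq_of_lt ht]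
  · intro h
    have quotient_lt : arcIndex (n * m) x / m < n :=
      Nat.div_lt_of_lt_mul ((arcIndex_lt (Nat.pos_of_ne_zero hl) x).trans_eq (mul_comm n m))
    exact ⟨_, quotient_lt, (mem_arc_iff quotient_lt).2 (h ▸ (Nat.mod_add_div _ _).symm)⟩

lemma RiemannSet_eq_arcResidueClass {l n t : ℕ} (hl : l ≠ 0) (hn : n ∣ l) (ht : t < l / n)
    {x : Circle1} (hx : x ∈ RiemannSet l n t) :
    RiemannSet l n t = arcResidueClass l (l / n) x := by
  ext z
  rw [mem_RiemannSet_iff hl hn ht, ← (mem_RiemannSet_iff hl hn ht x).1 hx]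
  rfl

lemma inv_measure_mul_setLIntegral {X : Type*} [MeasurableSpace X] (μ : Measure X) (s : Set X)
    (f : X → ℝ≥0∞) : (μ s)⁻¹ * ∫⁻ x in s, f x ∂μ = ⨍⁻ x in s, f x ∂μ := by
  rw [setLAverage_eq, ENNReal.div_eq_inv_mul]

lemma RMaxL_eq_iSup_arcResidueClass {l : ℕ} (hl : l ≠ 0) (D : Set ℕ) (f : Circle1 → ℝ)
    (x : Circle1) :
    RMaxL D l f x = ⨆ m ∈ divSet l D, ⨍⁻ z in arcResidueClass l m x, ‖f z‖₊ ∂volume := by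
  simp only [RMaxL, inv_measure_mul_setLIntegral]
  apply le_antisymm
  · simp only [iSup_le_iff]
    intro n hnD hnl t ht hx
    rw [RiemannSet_eq_arcResidueClass hl hnl ht hx]
    have mem_divSet : l / n ∈ divSet l D :=
      ⟨Nat.div_dvd_of_dvd hnl, by rwa [Nat.div_div_self hnl hl]⟩
    exact le_iSup₂_of_le (l / n) mem_divSet le_rfl
  · refine iSup₂_le fun m ⟨hml, hmD⟩ => ?_
    have hdd : l / (l / m) = m := Nat.div_div_self hml hl
    have hdvd : l / m ∣ l := Nat.div_dvd_of_dvd hml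
    have ht : arcIndex l x % m < l / (l / m) := by
      rw [hdd]
      exact Nat.mod_lt _ (Nat.pos_of_dvd_of_pos hml (Nat.pos_of_ne_zero hl))
    have hx : x ∈ RiemannSet l (l / m) (arcIndex l x % m) := by
      rw [mem_RiemannSet_iff hl hdvd ht, hdd]
    refine le_iSup₂_of_le (l / m) hmD <| le_iSup₂_of_le hdvd _ <| le_iSup₂_of_le ht hx ?_
    rw [RiemannSet_eq_arcResidueClass hl hdvd ht hx, hdd]

end RiemannSets

section Rectangles

lemma mem_Rect_iff {d : ℕ} {L j : Fin d → ℕ} (hj : ∀ k, j k < nthPrime k ^ L k) (y : Tinf) :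
    y ∈ Rect d L j ↔ ∀ k : Fin d, arcIndex (nthPrime k ^ L k) (y k) = j k :=
  forall_congr' fun k => mem_circleIco_iff_arcIndex_eq (hj k) _

lemma setLAverage_preimage {X Y : Type*} [MeasurableSpace X] [MeasurableSpace Y] {μ : Measure X}
    {ν : Measure Y} {τ : X → Y} (hτ : MeasurePreserving τ μ ν) (hemb : MeasurableEmbedding τ)
    (g : Y → ℝ≥0∞) (s : Set Y) :
    ⨍⁻ x in τ ⁻¹' s, g (τ x) ∂μ = ⨍⁻ y in s, g y ∂ν := by
  rw [setLAverage_eq, setLAverage_eq, hτ.setLIntegral_comp_preimage_emb hemb,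
    hτ.measure_preimage_emb hemb]

/-- `τ` sends the arcs of length `1 / l` into boxes by reversing digits: the leading base-`p_k`
digits of the `k`-th coordinate of `τ x` are the last digits of the arc index of `x`, in reversed
order. Only as many digits are prescribed as the exponent of `p_k` in `l`. -/
def IsDigitReversal (l : ℕ) (τ : Circle1 → Tinf) : Prop :=
  ∀ x k, ∀ e ≤ l.factorization (nthPrime k),
    arcIndex (nthPrime k ^ e) (τ x k) = digitReverse (nthPrime k) e (arcIndex l x)

lemma isDigitReversal_of_forall_fin {l : ℕ} {τ : Circle1 → Tinf}
    (h : ∀ x (k : Fin l), arcIndex (nthPrime k ^ l.factorization (nthPrime k)) (τ x k) =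
      digitReverse (nthPrime k) (l.factorization (nthPrime k)) (arcIndex l x)) :
    IsDigitReversal l τ := by
  intro x k e he
  have hp := (nthPrime_prime k).pos
  rcases Nat.eq_zero_or_pos e with rfl | he0
  · exact Nat.lt_one_iff.1 (by simpa using arcIndex_lt one_pos (τ x k))
  have hk : k < l := by
    by_contra! hlk
    have := Nat.factorization_eq_zero_of_lt (hlk.trans_lt (lt_nthPrime k))
    omega
  obtain ⟨i, hi⟩ := Nat.exists_eq_add_of_le he
  have full := h x ⟨k, hk⟩
  simp only [hi, pow_add] at full
  rw [← arcIndex_mul_div (pow_pos hp i).ne', full, digitReverse_add_div_pow hp]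

variable {l d : ℕ} {τ : Circle1 → Tinf} {L j : Fin d → ℕ}

lemma IsDigitReversal.preimage_Rect (hτ : IsDigitReversal l τ) (hl : l ≠ 0)
    (hL : ∏ k : Fin d, nthPrime k ^ L k ∣ l) (hj : ∀ k, j k < nthPrime k ^ L k) {x : Circle1}
    (hx : τ x ∈ Rect d L j) :
    τ ⁻¹' Rect d L j = arcResidueClass l (∏ k : Fin d, nthPrime k ^ L k) x := by
  have exponent_le (k : Fin d) : L k ≤ l.factorization (nthPrime k) :=
    ((nthPrime_prime k).pow_dvd_iff_le_factorization hl).1 <|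
      (Finset.dvd_prod_of_mem (fun k : Fin d => nthPrime k ^ L k) (Finset.mem_univ k)).trans hL
  have arcIndex_eq (z : Circle1) (k : Fin d) : arcIndex (nthPrime k ^ L k) (τ z k) =
      digitReverse (nthPrime k) (L k) (arcIndex l z) := hτ z k _ (exponent_le k)
  simp only [mem_Rect_iff hj, arcIndex_eq] at hx
  ext z
  simp only [mem_preimage, mem_Rect_iff hj, arcIndex_eq, ← hx]
  exact forall_digitReverse_eq_iff_modEq (fun k : Fin d => (nthPrime_prime k).pos)
    (pairwise_coprime_nthPrime_pow L)

lemma IsDigitReversal.MMax_eq_iSup_arcResidueClass {μ : Measure Tinf} (hτ : IsDigitReversal l τ)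
    (hpres : MeasurePreserving τ volume μ) (hemb : MeasurableEmbedding τ) (hl : l ≠ 0) (D : Set ℕ)
    (g : Tinf → ℝ) (x : Circle1) :
    MMax μ (divSet l D) g (τ x) =
      ⨆ m ∈ divSet l D, ⨍⁻ z in arcResidueClass l m x, ‖g (τ z)‖₊ ∂volume := by
  simp only [MMax, inv_measure_mul_setLIntegral,
    ← setLAverage_preimage hpres hemb fun y => (‖g y‖₊ : ℝ≥0∞)]
  apply le_antisymm
  · simp only [iSup_le_iff]
    intro d L j hLD hj hx
    rw [hτ.preimage_Rect hl hLD.1 hj hx]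
    exact le_iSup₂_of_le _ hLD le_rfl
  · refine iSup₂_le fun m hmD => ?_
    have hm : m ∣ l := hmD.1
    obtain ⟨L, rfl⟩ : ∃ L : Fin l → ℕ, ∏ k : Fin l, nthPrime k ^ L k = m :=
      ⟨_, prod_nthPrime_pow_factorization (ne_zero_of_dvd_ne_zero hl hm)
        (Nat.le_of_dvd (Nat.pos_of_ne_zero hl) hm)⟩
    let j : Fin l → ℕ := fun k => arcIndex (nthPrime k ^ L k) (τ x k)
    have hj (k) : j k < nthPrime k ^ L k := arcIndex_lt (pow_pos (nthPrime_prime k).pos _) _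
    have hx : τ x ∈ Rect l L j := (mem_Rect_iff hj _).2 fun k => rfl
    rw [← hτ.preimage_Rect hl hm hj hx]
    exact le_iSup₂_of_le l L <| le_iSup₂_of_le j hmD <| le_iSup₂_of_le hj hx le_rfl

end Rectangles

section ProductMeasure

variable {μ : Measure Tinf}

lemma IsProductLebesgue.measure_forall_fin (hμ : IsProductLebesgue μ) {d : ℕ}
    {A : Fin d → Set Circle1} (hA : ∀ k, MeasurableSet (A k)) :
    μ {y | ∀ k : Fin d, y k ∈ A k} = ∏ k, volume (A k) := by
  let A' : ℕ → Set Circle1 := fun k => if h : k < d then A ⟨k, h⟩ else univ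
  have hA' (k : ℕ) : MeasurableSet (A' k) := by
    dsimp only [A']
    split_ifs with h
    exacts [hA _, .univ]
  simpa only [Finset.mem_map, Finset.mem_univ, true_and, forall_exists_index,
    forall_apply_eq_imp_iff, Fin.valEmbedding_apply, Finset.prod_map, Fin.is_lt, dite_true, A']
    using hμ.2 ((Finset.univ : Finset (Fin d)).map Fin.valEmbedding) A' hA'

lemma IsProductLebesgue.nullSingletonClass (hμ : IsProductLebesgue μ) : NullSingletonClass μ := by
  have := nullSingletonClass_circle
  refine ⟨fun y => measure_mono_null (t := {x | ∀ k : Fin 1, x k ∈ ({y k} : Set Circle1)}) ?_ ?_⟩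
  · rintro _ rfl k
    rfl
  · rw [hμ.measure_forall_fin fun k => measurableSet_singleton _]
    simp

lemma IsProductLebesgue.measure_forall_arcIndex_eq (hμ : IsProductLebesgue μ) {d : ℕ}
    {N j : Fin d → ℕ} (hj : ∀ k, j k < N k) :
    μ {y | ∀ k : Fin d, arcIndex (N k) (y k) = j k} = ((∏ k, N k : ℕ) : ℝ≥0∞)⁻¹ :=
  calc μ {y | ∀ k : Fin d, arcIndex (N k) (y k) = j k}
      = ∏ k, volume {x | arcIndex (N k) x = j k} :=
        hμ.measure_forall_fin fun k => measurable_arcIndex _ (measurableSet_singleton _)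
    _ = ((∏ k, N k : ℕ) : ℝ≥0∞)⁻¹ := by
        simp only [volume_arcIndex_eq (hj _)]
        rw [← ENNReal.prod_inv_distrib, Nat.cast_prod]
        exact fun _ _ _ _ _ => .inr (ENNReal.natCast_ne_top _)

lemma volume_forall_digitReverse_arcIndex_eq {κ : Type*} [Fintype κ] {p e j : κ → ℕ}
    (hp : ∀ k, 0 < p k) (hcop : Pairwise (Nat.Coprime on fun k => p k ^ e k))
    (hj : ∀ k, j k < p k ^ e k) :
    volume {x | ∀ k, digitReverse (p k) (e k) (arcIndex (∏ k, p k ^ e k) x) = j k} =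
      ((∏ k, p k ^ e k : ℕ) : ℝ≥0∞)⁻¹ := by
  obtain ⟨n, hn, digits_n⟩ := exists_lt_prod_digitReverse_eq hp hcop hj
  simp only [← digits_n, forall_digitReverse_eq_iff_modEq hp hcop]
  have modEq_iff (x : Circle1) : arcIndex (∏ k, p k ^ e k) x ≡ n [MOD ∏ k, p k ^ e k] ↔
      arcIndex (∏ k, p k ^ e k) x = n :=
    ⟨fun h => h.eq_of_lt_of_lt (arcIndex_lt (Nat.zero_lt_of_lt hn) x) hn, fun h => h ▸ .rfl⟩
  simp only [modEq_iff, volume_arcIndex_eq hn]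

lemma measurable_finMk {X : Type*} [MeasurableSpace X] {n : ℕ} {f : X → ℕ} (hf : Measurable f)
    (hn : ∀ x, f x < n) : Measurable fun x => (⟨f x, hn x⟩ : Fin n) :=
  measurable_to_countable' fun i => by
    simpa only [preimage, mem_singleton_iff, Fin.ext_iff] using hf (measurableSet_singleton (i : ℕ))

theorem IsProductLebesgue.exists_isDigitReversal (hμ : IsProductLebesgue μ) {l : ℕ} (hl : l ≠ 0) :
    ∃ τ : Circle1 ≃ᵐ Tinf, MeasurePreserving τ volume μ ∧ IsDigitReversal l τ := by
  have := hμ.1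
  have := hμ.nullSingletonClass
  have := nullSingletonClass_circle
  let e : Fin l → ℕ := fun k => l.factorization (nthPrime k)
  have prod_eq : ∏ k : Fin l, nthPrime k ^ e k = l := prod_nthPrime_pow_factorization hl le_rfl
  let a : Circle1 → ∀ k : Fin l, Fin (nthPrime k ^ e k) := fun x k =>
    ⟨digitReverse (nthPrime k) (e k) (arcIndex l x), digitReverse_lt (nthPrime_prime k).pos _ _⟩
  let b : Tinf → ∀ k : Fin l, Fin (nthPrime k ^ e k) := fun y k =>
    ⟨arcIndex (nthPrime k ^ e k) (y k), arcIndex_lt (pow_pos (nthPrime_prime k).pos _) _⟩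
  have ha : Measurable a := measurable_pi_lambda _ fun k =>
    measurable_finMk (measurable_from_nat.comp (measurable_arcIndex l)) _
  have hb : Measurable b := measurable_pi_lambda _ fun k =>
    measurable_finMk ((measurable_arcIndex _).comp (measurable_pi_apply (k : ℕ))) _
  have volume_fiber (i) : volume {x | a x = i} = (l : ℝ≥0∞)⁻¹ := by
    have := volume_forall_digitReverse_arcIndex_eq (fun k : Fin l => (nthPrime_prime k).pos)
      (pairwise_coprime_nthPrime_pow e) fun k => (i k).2
    simpa only [prod_eq, a, funext_iff, Fin.ext_iff] using this
  have measure_fiber (i) : μ {y | b y = i} = (l : ℝ≥0∞)⁻¹ := by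
    have := hμ.measure_forall_arcIndex_eq fun k => (i k).2
    simpa only [prod_eq, b, funext_iff, Fin.ext_iff] using this
  obtain ⟨τ, hpres, hτ⟩ := exists_measurableEquiv_measurePreserving_fiber ha hb
    (fun i => (volume_fiber i).trans (measure_fiber i).symm)
    (fun i => by simp [volume_fiber])
  exact ⟨τ, hpres, isDigitReversal_of_forall_fin fun x k => congrArg Fin.val (congrFun (hτ x) k)⟩

end ProductMeasure

theorem IsProductLebesgue.exists_MMax_eq_RMaxL {μ : Measure Tinf} (hμ : IsProductLebesgue μ) {l : ℕ}
    (hl : l ≠ 0) : ∃ τ : Circle1 ≃ᵐ Tinf, MeasurePreserving τ volume μ ∧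
      ∀ (f : Circle1 → ℝ) (D : Set ℕ) (x : Circle1),
        MMax μ (divSet l D) (f ∘ τ.symm) (τ x) = RMaxL D l f x := by
  obtain ⟨τ, hpres, hτ⟩ := hμ.exists_isDigitReversal hl
  refine ⟨τ, hpres, fun f D x => ?_⟩
  rw [hτ.MMax_eq_iSup_arcResidueClass hpres τ.measurableEmbedding hl,
    RMaxL_eq_iSup_arcResidueClass hl]
  simp only [comp_apply, τ.symm_apply_apply]

theorem riemann_maximal_eq_rect_maximal_general
    (μ : Measure Tinf) (hμ : IsProductLebesgue μ) (l : ℕ) (hl : 1 ≤ l) :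
    ∃ τ : Circle1 → Tinf, Function.Bijective τ ∧
      (∀ A : Set Circle1, μ (τ '' A) = volume A) ∧
      ∀ (f : Circle1 → ℝ) (D : Set ℕ) (c : ℝ≥0∞),
        volume {x : Circle1 | c < RMaxL D l f x} =
          μ {x : Tinf | c < MMax μ (divSet l D) (f ∘ Function.invFun τ) x} := by
  obtain ⟨τ, hpres, hτ⟩ := hμ.exists_MMax_eq_RMaxL (Nat.one_le_iff_ne_zero.1 hl)
  have invFun_eq : invFun τ = τ.symm :=
    invFun_eq_of_injective_of_rightInverse τ.injective τ.apply_symm_apply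
  refine ⟨τ, τ.bijective, fun A => ?_, fun f D c => ?_⟩
  · rw [← hpres.measure_preimage_equiv, preimage_image_eq _ τ.injective]
  · simp only [← hpres.measure_preimage_equiv, invFun_eq, preimage_ofPred_eq, hτ]

/-- **Equivalence of the Riemann maximal function and the rectangle maximal function.**
For every `l` there is a measure-preserving bijection `τ_l : 𝕋 → 𝕋^∞` such that for all
`f ∈ L¹(𝕋)`, setting `g = f ∘ τ_l⁻¹`, the superlevel sets of `ℛ_D^l f` and of
`ℳ_{l/D} g` have equal measures. -/
theorem riemann_maximal_eq_rect_maximal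
    (μ : Measure Tinf) (hμ : IsProductLebesgue μ) (l : ℕ) (hl : 1 ≤ l) :
    ∃ τ : Circle1 → Tinf, Function.Bijective τ ∧
      (∀ A : Set Circle1, MeasurableSet A → μ (τ '' A) = volume A) ∧
      ∀ f : Circle1 → ℝ, Integrable f volume →
        ∀ (D : Set ℕ) (lam : ℝ), 0 < lam →
          volume {x : Circle1 | ENNReal.ofReal lam < RMaxL D l f x} =
            μ {x : Tinf |
              ENNReal.ofReal lam < MMax μ (divSet l D) (f ∘ Function.invFun τ) x} := by
  obtain ⟨τ, hτ, hmeasure, hlevel⟩ := riemann_maximal_eq_rect_maximal_general μ hμ l hl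
  exact ⟨τ, hτ, fun A _ => hmeasure A, fun f _ D lam _ => hlevel f D (.ofReal lam)⟩
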